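/- For every integer k with 5 ≤ k ≤ 10, every ε > 0 and every N, there exists an input list L such that OPT(L) ≥ N and FF(L) ≥ (8(k−1)/(3k) − ε)·OPT(L), where FF is First Fit with cardinality constraint k. Consequently, the asymptotic competitive ratio of First Fit for 5 ≤ k ≤ 10 is at least 8(k−1)/(3k). -/

import Mathlib

/-!
The input consists of tiny items, items of size about `1/4` and `1/2`, and items slightly larger
than `1/2`. Up to small perturbations, an optimal packing has three equally frequent kinds of
bins: twice `{1/2+, 1/4, 1/4}` and once `{1/2+, 1/2-}`, all filled up with tiny items to `k`
items. So three bins contain `3k - 8` tiny items, four of size about `1/4`, one `1/2-` and three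
`1/2+`. First Fit receives the tiny items first and puts `k` of them into each bin; it then packs
bins `{1/4, 1/4, 1/4}`, bins `{1/2-, 1/4+}`, and finally each `1/2+` alone. This costs
`(3k - 8)/k + 1 + 1 + 3 = 8(k - 1)/k` bins per three optimal bins.

The perturbations must ensure that a First Fit bin with three items near `1/4` does not accept
any later item, although each item near `1/4` has a partner with which its size is strictly below
`1/2`. With `b_j = offset j` decreasing geometrically and `u = grain M` tiny, the `j`-th triple is
`1/4 + b_j - 2u`, `1/4 - b_{j+1}`, `1/4 - 4u`. Its size `3/4 + 2 b_{j+1} - 6u` blocks all later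
items (`groups_pairwise`), whereas the optimum pairs `1/4 + b_j - 2u` with `1/4 - b_j`, taken from
the previous triple, and `1/4 - 4u` with the item `1/4 + 2u` of a bin `{1/2-, 1/4+}`
(`coe_instance`). The shift by one index costs a single additional optimal bin.

`ffState_flatten` computes the First Fit packing from the list of its bins, and `exists_feasible`
bounds the optimum by a decomposition of the multiset of items.
-/

open scoped Classical
noncomputable section

/-- An input is a list of item sizes, each in (0,1]. -/
def ValidInput (L : List ℝ) : Prop := ∀ x ∈ L, 0 < x ∧ x ≤ 1

/-- A packing assigns a bin index to each item; it is feasible for cardinality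
constraint `k` if every bin receives at most `k` items of total size at most 1. -/
def IsFeasible (k : ℕ) (L : List ℝ) (f : Fin L.length → ℕ) : Prop :=
  ∀ b : ℕ,
    (Finset.univ.filter (fun i => f i = b)).card ≤ k ∧
    ∑ i ∈ Finset.univ.filter (fun i => f i = b), L.get i ≤ 1

/-- The number of bins used by a packing. -/
def binsUsed (L : List ℝ) (f : Fin L.length → ℕ) : ℕ :=
  (Finset.univ.image f).card

/-- The optimal (minimum) number of bins in a feasible packing of `L`. -/
def OPT (k : ℕ) (L : List ℝ) : ℕ :=
  sInf {n | ∃ f : Fin L.length → ℕ, IsFeasible k L f ∧ binsUsed L f = n}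

/-- A deterministic online algorithm is a strategy: given the items seen so far
(ending with the item to be packed), it returns the bin index for that item. -/
def onlinePacking (A : List ℝ → ℕ) (L : List ℝ) : Fin L.length → ℕ :=
  fun i => A (L.take (i.1 + 1))

/-- The strategy `A` is a valid online algorithm for cardinality constraint `k`
if on every valid input the induced packing is feasible. -/
def OnlineValid (k : ℕ) (A : List ℝ → ℕ) : Prop :=
  ∀ L : List ℝ, ValidInput L → IsFeasible k L (onlinePacking A L)

/-- The number of bins used by online algorithm `A` on input `L`. -/
def onlineBins (A : List ℝ → ℕ) (L : List ℝ) : ℕ :=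
  binsUsed L (onlinePacking A L)

/-- The state of First Fit: a list of open bins (in order of opening),
each recorded as (number of items, total size). `ffFind` returns the index of
the first bin that can receive an item of size `x` (it has at most `k-1` items
and the item fits); if none, the index of a new bin. -/
def ffFind (k : ℕ) (x : ℝ) : List (ℕ × ℝ) → ℕ
  | [] => 0
  | b :: bs => if b.1 < k ∧ b.2 + x ≤ 1 then 0 else ffFind k x bs + 1

/-- Update the First Fit state after packing an item of size `x`. -/
def ffUpdate (k : ℕ) (x : ℝ) : List (ℕ × ℝ) → List (ℕ × ℝ)
  | [] => [(1, x)]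
  | b :: bs =>
      if b.1 < k ∧ b.2 + x ≤ 1 then (b.1 + 1, b.2 + x) :: bs
      else b :: ffUpdate k x bs

/-- The final state of First Fit with cardinality constraint `k` on input `L`. -/
def ffState (k : ℕ) (L : List ℝ) : List (ℕ × ℝ) :=
  L.foldl (fun bs x => ffUpdate k x bs) []

/-- The number of bins used by First Fit with cardinality constraint `k` on `L`. -/
def FF (k : ℕ) (L : List ℝ) : ℕ := (ffState k L).length

/-- The bin index into which First Fit packs the `i`-th item of `L`. -/
def ffAssign (k : ℕ) (L : List ℝ) (i : Fin L.length) : ℕ :=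
  ffFind k (L.get i) (ffState k (L.take i.1))

/-! ### Bounding the optimum -/

theorem exists_list_map_eq {α β : Type*} (f : α → β) (l : List β) :
    ∀ s : Multiset α, s.map f = (l : Multiset β) → ∃ P : List α, (P : Multiset α) = s ∧ P.map f = l := by
  induction l with
  | nil =>
    intro s hs
    refine ⟨[], ?_, rfl⟩
    simpa [eq_comm] using hs
  | cons a l ih =>
    intro s hs
    rw [← Multiset.cons_coe, ← Multiset.map_eq_cons] at hs
    obtain ⟨x, hx, hxa, hs⟩ := hs
    obtain ⟨P, hP, hPl⟩ := ih _ hs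
    refine ⟨x :: P, ?_, by simp [hxa, hPl]⟩
    rw [← Multiset.cons_coe, hP, Multiset.cons_erase hx]

/-- A decomposition of the multiset of items into bins `B i`, each with at most `k` items and
total size at most 1, yields a feasible packing of the list with at most `card ι` bins. -/
theorem exists_feasible {ι : Type} [Fintype ι] (k : ℕ) (L : List ℝ) (B : ι → Multiset ℝ)
    (hL : (L : Multiset ℝ) = ∑ i, B i) (hc : ∀ i, (B i).card ≤ k) (hs : ∀ i, (B i).sum ≤ 1) :
    ∃ f : Fin L.length → ℕ, IsFeasible k L f ∧ binsUsed L f ≤ Fintype.card ι := by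
  obtain ⟨P, hP, rfl⟩ := exists_list_map_eq Prod.fst L (∑ i, (B i).map (fun x => (x, i))) (by
    rw [hL, ← Multiset.coe_mapAddMonoidHom, map_sum]
    simp)
  let e := Fintype.equivFin ι
  let f : Fin (P.map Prod.fst).length → ℕ :=
    fun i => (e (P[i.1]'(by simpa using i.2)).2 : ℕ)
  -- taking `h = 1` gives the number of items in bin `j`, and `h = id` their total size
  have key : ∀ (h : ℝ → ℝ) (j : ι), ∑ i ∈ Finset.univ.filter (fun i => f i = e j),
      h ((P.map Prod.fst).get i) = ((B j).map h).sum := by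
    intro h j
    have h1 : ∑ i ∈ Finset.univ.filter (fun i => f i = e j), h ((P.map Prod.fst).get i)
        = ∑ i : Fin P.length, (fun p : ℝ × ι => if p.2 = j then h p.1 else 0) P[i.1] := by
      rw [Finset.sum_filter]
      refine Fintype.sum_equiv (finCongr (by simp)) _ _ ?_
      intro i
      simp [f, Fin.val_inj]
    rw [h1, Fin.sum_univ_fun_getElem P (fun p : ℝ × ι => if p.2 = j then h p.1 else 0),
      ← Multiset.sum_coe, ← Multiset.map_coe, hP,
      ← Multiset.coe_mapAddMonoidHom, map_sum, ← Multiset.coe_sumAddMonoidHom, map_sum]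
    rw [Finset.sum_eq_single j]
    · simp
    · intro b _ hb
      simp [hb]
    · simp
  refine ⟨f, ?_, ?_⟩
  · intro b
    by_cases hb : ∃ j, (e j : ℕ) = b
    · obtain ⟨j, rfl⟩ := hb
      have h1 := key (fun _ => 1) j
      have h2 := key (fun x => x) j
      constructor
      · have : ((Finset.univ.filter (fun i => f i = e j)).card : ℝ) = (B j).card := by
          simpa using h1
        have h3 := hc j
        rw [← Nat.cast_inj.mp this] at h3
        exact h3
      · rw [h2]; simpa using hs j
    · have : Finset.univ.filter (fun i => f i = b) = ∅ := by
        apply Finset.filter_eq_empty_iff.mpr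
        intro i _ hi
        exact hb ⟨_, hi⟩
      rw [this]; simp
  · unfold binsUsed
    calc _ ≤ (Finset.range (Fintype.card ι)).card := by
          apply Finset.card_le_card
          intro x hx
          simp only [Finset.mem_image, Finset.mem_univ, true_and] at hx
          obtain ⟨i, rfl⟩ := hx
          simp [f]
      _ = _ := by simp

theorem OPT_le {k : ℕ} {L : List ℝ} {f : Fin L.length → ℕ} (hf : IsFeasible k L f) :
    OPT k L ≤ binsUsed L f := Nat.sInf_le ⟨f, hf, rfl⟩

/-- The existence of some feasible packing is needed because `OPT` is an infimum over `ℕ`,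
which is `0` on the empty set. -/
theorem length_le_mul_OPT {k : ℕ} {L : List ℝ} {f : Fin L.length → ℕ} (hf : IsFeasible k L f) :
    L.length ≤ k * OPT k L := by
  obtain ⟨g, hg, hgn⟩ : OPT k L ∈ {n | ∃ f : Fin L.length → ℕ, IsFeasible k L f ∧ binsUsed L f = n} :=
    Nat.sInf_mem ⟨_, f, hf, rfl⟩
  rw [← hgn]
  have := Finset.card_le_mul_card_image (f := g) (Finset.univ) k (fun b _ => (hg b).1)
  simpa [binsUsed] using this

/-! ### First Fit -/

theorem ffUpdate_append (k : ℕ) (x : ℝ) (bs cs : List (ℕ × ℝ))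
    (h : ∀ b ∈ bs, ¬ (b.1 < k ∧ b.2 + x ≤ 1)) :
    ffUpdate k x (bs ++ cs) = bs ++ ffUpdate k x cs := by
  induction bs with
  | nil => rfl
  | cons b bs ih =>
    have h1 := h b (by simp)
    simp only [List.cons_append, ffUpdate, if_neg h1]
    rw [ih (fun b hb => h b (by simp [hb]))]

/-- Items that fit in none of the bins `bs` are packed as if these bins were absent. -/
theorem foldl_ffUpdate_append (k : ℕ) (S : List ℝ) (bs : List (ℕ × ℝ))
    (h : ∀ b ∈ bs, ∀ x ∈ S, ¬ (b.1 < k ∧ b.2 + x ≤ 1)) : ∀ cs,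
    S.foldl (fun bs x => ffUpdate k x bs) (bs ++ cs)
      = bs ++ S.foldl (fun bs x => ffUpdate k x bs) cs := by
  induction S with
  | nil => intro cs; rfl
  | cons a S ih =>
    intro cs
    simp only [List.foldl_cons]
    rw [ffUpdate_append k a bs cs (fun b hb => h b hb a (by simp))]
    exact ih (fun b hb x hx => h b hb x (by simp [hx])) _

theorem foldl_ffUpdate_single (k : ℕ) (S : List ℝ) : ∀ (n : ℕ) (v : ℝ),
    n + S.length ≤ k → v + S.sum ≤ 1 → (∀ x ∈ S, 0 ≤ x) →
    S.foldl (fun bs x => ffUpdate k x bs) [(n, v)] = [(n + S.length, v + S.sum)] := by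
  induction S with
  | nil => intro n v _ _ _; simp
  | cons a S ih =>
    intro n v hn hv hS
    have h0 : 0 ≤ S.sum := List.sum_nonneg (fun x hx => hS x (by simp [hx]))
    simp only [List.length_cons, List.sum_cons] at hn hv
    have h1 : n < k ∧ v + a ≤ 1 := ⟨by omega, by linarith⟩
    simp only [List.foldl_cons, ffUpdate, if_pos h1]
    rw [ih (n + 1) (v + a) (by omega) (by linarith) (fun x hx => hS x (by simp [hx]))]
    simp only [List.length_cons, List.sum_cons]
    congr 2
    · omega
    · ring

theorem ffState_group (k : ℕ) (S : List ℝ) (hne : S ≠ []) (hk : S.length ≤ k) (hs : S.sum ≤ 1)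
    (h0 : ∀ x ∈ S, 0 ≤ x) : ffState k S = [(S.length, S.sum)] := by
  cases S with
  | nil => exact absurd rfl hne
  | cons a S =>
    simp only [ffState, List.foldl_cons, ffUpdate]
    simp only [List.length_cons, List.sum_cons] at hk hs
    rw [foldl_ffUpdate_single k S 1 a (by omega) hs (fun x hx => h0 x (by simp [hx]))]
    simp [add_comm]

/-- A bin with content `G` accepts no item of `G'`: it is full or has too little space left. -/
def Blocks (k : ℕ) (G G' : List ℝ) : Prop := ∀ x ∈ G', G.length = k ∨ 1 < G.sum + x

/-- If each group fits in a bin, and its bin blocks all items of later groups, then First Fit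
packs each group into its own bin. -/
theorem ffState_flatten (k : ℕ) (Gs : List (List ℝ))
    (hg : ∀ G ∈ Gs, G ≠ [] ∧ G.length ≤ k ∧ G.sum ≤ 1 ∧ ∀ x ∈ G, 0 ≤ x)
    (hp : Gs.Pairwise (Blocks k)) :
    ffState k Gs.flatten = Gs.map (fun G => (G.length, G.sum)) := by
  induction Gs with
  | nil => rfl
  | cons G Gs ih =>
    rw [List.pairwise_cons] at hp
    obtain ⟨h1, h2, h3, h4⟩ := hg G (by simp)
    have hG := ffState_group k G h1 h2 h3 h4
    have ih' := ih (fun G hG => hg G (by simp [hG])) hp.2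
    unfold ffState at hG ih' ⊢
    rw [List.flatten_cons, List.foldl_append, hG,
      ← List.append_nil [(G.length, G.sum)], foldl_ffUpdate_append, ih']
    · rfl
    · intro b hb x hx
      obtain ⟨G', hG', hx⟩ := List.mem_flatten.mp hx
      simp only [List.mem_singleton] at hb
      subst hb
      rintro ⟨h5, h6⟩
      rcases hp.1 G' hG' x hx with h | h
      · exact absurd h5 (by simp [h])
      · exact absurd h6 (not_le.mpr h)

theorem length_le_ffUpdate (k : ℕ) (x : ℝ) (bs : List (ℕ × ℝ)) :
    bs.length ≤ (ffUpdate k x bs).length := by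
  induction bs with
  | nil => simp
  | cons b bs ih =>
    simp only [ffUpdate]
    split_ifs <;> simp [ih]

theorem FF_le_append (k : ℕ) (L E : List ℝ) : FF k L ≤ FF k (L ++ E) := by
  unfold FF ffState
  rw [List.foldl_append]
  generalize L.foldl (fun bs x => ffUpdate k x bs) [] = bs
  induction E generalizing bs with
  | nil => rfl
  | cons a E ih => exact (length_le_ffUpdate k a bs).trans (ih _)

/-! ### The instance -/

/-- The deviation from `1/4` of the medium items, shrinking by a factor 3 from one First Fit
bin to the next. -/
def offset (j : ℕ) : ℝ := (1 / 100) * (1 / 3) ^ j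

/-- A unit of size that is negligible against every `offset j` with `j ≤ M`. -/
def grain (M : ℕ) : ℝ := (1 / 900) * (1 / 3) ^ M

theorem offset_succ (j : ℕ) : offset j = 3 * offset (j + 1) := by
  unfold offset; rw [pow_succ]; ring

theorem offset_anti {i j : ℕ} (h : i ≤ j) : offset j ≤ offset i := by
  unfold offset
  have := pow_le_pow_of_le_one (a := (1 / 3 : ℝ)) (by norm_num) (by norm_num) h
  linarith

theorem offset_le (j : ℕ) : offset j ≤ 1 / 100 := by
  have := offset_anti (Nat.zero_le j)
  simpa [offset] using this

theorem grain_pos (M : ℕ) : 0 < grain M := by unfold grain; positivity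

theorem nine_grain_le {j M : ℕ} (h : j ≤ M) : 9 * grain M ≤ offset j := by
  have h1 := offset_anti h
  have : 9 * grain M = offset M := by unfold grain offset; ring
  linarith

/-- Medium item slightly larger than `1/4`; together with `quarterDown j` its size is
`1/2 - 2 * grain M`. -/
def quarterUp (M j : ℕ) : ℝ := 1 / 4 + offset j - 2 * grain M

/-- Medium item slightly smaller than `1/4`. -/
def quarterDown (j : ℕ) : ℝ := 1 / 4 - offset j

/-- Size of the tiny items; `k` of them have total size `grain M`. -/
def tiny (k M : ℕ) : ℝ := grain M / k

/-- The contents of the First Fit bins, in order of opening. Note that the `j`-th triple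
contains `quarterDown (j + 1)`, while the optimum pairs `quarterUp M j` with `quarterDown j`. -/
def groups (k m : ℕ) : List (List ℝ) :=
  let M := k * m
  let u := grain M
  List.replicate (m * (3 * k - 8)) (List.replicate k (tiny k M)) ++
  ((List.range M).map (fun j => [quarterUp M j, quarterDown (j + 1), 1 / 4 - 4 * u]) ++
  (List.replicate M [1 / 2 - 2 * u, 1 / 4 + 2 * u] ++
  List.replicate (3 * M) [1 / 2 + u]))

/-- Items arriving after those of `groups`; they complete the two unmatched ends of the chain
of medium items, so that all items fill the bins `optBin` exactly. -/
def extras (k m : ℕ) : List ℝ :=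
  quarterDown 0 :: quarterUp (k * m) (k * m) :: (1 / 2 + grain (k * m)) ::
    List.replicate (k - 3) (tiny k (k * m))

theorem tiny_pos {k : ℕ} (hk : 3 ≤ k) (M : ℕ) : 0 < tiny k M := by
  have : (0 : ℝ) < k := by exact_mod_cast (by omega : 0 < k)
  exact div_pos (grain_pos M) this

theorem mul_tiny_le {k c : ℕ} (hk : 3 ≤ k) (hc : c ≤ k) (M : ℕ) : c * tiny k M ≤ grain M := by
  have h0 : (0 : ℝ) < k := by exact_mod_cast (by omega : 0 < k)
  have h1 : (c : ℝ) ≤ k := by exact_mod_cast hc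
  have h2 : (k : ℝ) * tiny k M = grain M := by unfold tiny; field_simp
  have := mul_le_mul_of_nonneg_right h1 (tiny_pos hk M).le
  linarith

theorem grain_le (M : ℕ) : grain M ≤ 1 / 900 := by
  have := nine_grain_le (le_refl M)
  have := offset_le M
  linarith

theorem groups_good {k : ℕ} (hk : 3 ≤ k) (m : ℕ) :
    ∀ G ∈ groups k m, G ≠ [] ∧ G.length ≤ k ∧ G.sum ≤ 1 ∧ ∀ x ∈ G, 0 < x := by
  intro G hG
  have hu := grain_pos (k * m)
  have hu' := grain_le (k * m)
  simp only [groups, List.mem_append, List.mem_replicate, List.mem_map, List.mem_range] at hG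
  rcases hG with ⟨_, rfl⟩ | ⟨j, hj, rfl⟩ | ⟨_, rfl⟩ | ⟨_, rfl⟩
  · have h1 := mul_tiny_le hk le_rfl (k * m)
    refine ⟨?_, by simp, ?_, ?_⟩
    · intro h
      have := congrArg List.length h
      simp at this; omega
    · simp; linarith
    · intro x hx
      rw [List.eq_of_mem_replicate hx]; exact tiny_pos hk _
  · have h1 := nine_grain_le hj.le
    have h2 := offset_le j
    have h3 := offset_succ j
    refine ⟨by simp, by simpa using hk, ?_, ?_⟩
    · simp [quarterUp, quarterDown]; linarith
    · simp [quarterUp, quarterDown]; refine ⟨?_, ?_, ?_⟩ <;> linarith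
  · refine ⟨by simp, by simp; omega, ?_, ?_⟩
    · simp; linarith
    · simp; refine ⟨?_, ?_⟩ <;> linarith
  · refine ⟨by simp, by simp; omega, ?_, ?_⟩
    · simp; linarith
    · simp; linarith

/-- Triple `j` has total size `3/4 + 2 * offset (j + 1) - 6 * grain M`, which exceeds
`1 - quarterDown (j' + 1)` for all `j' > j`. -/
theorem groups_pairwise {k : ℕ} (m : ℕ) : (groups k m).Pairwise (Blocks k) := by
  have hu := grain_pos (k * m)
  have hu' := grain_le (k * m)
  have hfull : ∀ G', Blocks k (List.replicate k (tiny k (k * m))) G' := fun G' x _ => Or.inl (by simp)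
  unfold groups
  refine List.pairwise_append.mpr ⟨?_, List.pairwise_append.mpr ⟨?_, List.pairwise_append.mpr
    ⟨?_, ?_, ?_⟩, ?_⟩, ?_⟩
  · exact List.pairwise_replicate.mpr (Or.inr (hfull _))
  · rw [List.pairwise_map]
    refine List.Pairwise.imp_of_mem ?_ List.pairwise_lt_range
    intro i j hi hj hij x hx
    right
    rw [List.mem_range] at hi hj
    have h1 := nine_grain_le hj.le
    have h2 := nine_grain_le (Nat.succ_le_of_lt hi)
    have h3 := offset_succ i
    have h4 := offset_anti (show i + 1 ≤ j + 1 by omega)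
    simp only [List.mem_cons, List.not_mem_nil, or_false] at hx
    simp only [List.sum_cons, List.sum_nil, quarterUp, quarterDown] at hx ⊢
    rcases hx with rfl | rfl | rfl <;> simp only [Nat.succ_eq_add_one] at * <;> linarith
  · refine List.pairwise_replicate.mpr (Or.inr ?_)
    intro x hx
    right
    simp only [List.mem_cons, List.not_mem_nil, or_false] at hx
    simp only [List.sum_cons, List.sum_nil]
    rcases hx with rfl | rfl <;> linarith
  · refine List.pairwise_replicate.mpr (Or.inr ?_)
    intro x hx
    right
    simp only [List.mem_cons, List.not_mem_nil, or_false] at hx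
    simp only [List.sum_cons, List.sum_nil]
    rcases hx with rfl; linarith
  · intro G hG G' hG' x hx
    right
    rw [List.eq_of_mem_replicate hG]
    rw [List.eq_of_mem_replicate hG'] at hx
    simp only [List.mem_cons, List.not_mem_nil, or_false] at hx
    simp only [List.sum_cons, List.sum_nil]
    rcases hx with rfl; linarith
  · intro G hG G' hG' x hx
    right
    simp only [List.mem_map, List.mem_range] at hG
    obtain ⟨j, hj, rfl⟩ := hG
    have h2 := nine_grain_le (Nat.succ_le_of_lt hj)
    have h3 := offset_succ j
    have hx' : 1 / 4 + 2 * grain (k * m) ≤ x := by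
      simp only [List.mem_append, List.mem_replicate] at hG'
      rcases hG' with ⟨_, rfl⟩ | ⟨_, rfl⟩ <;>
        simp only [List.mem_cons, List.not_mem_nil, or_false] at hx
      · rcases hx with rfl | rfl <;> linarith
      · rcases hx with rfl; linarith
    simp only [List.sum_cons, List.sum_nil, quarterUp, quarterDown, Nat.succ_eq_add_one] at *
    linarith
  · intro G hG H _
    rw [List.eq_of_mem_replicate hG]
    exact hfull H

/-- The bins of a packing with `3 * (k * m) + 1` bins, each containing one item larger than
`1/2` and filled up with tiny items to exactly `k` items. -/
def optBin (k m : ℕ) : Fin (k * m + 1) ⊕ Fin (k * m) ⊕ Fin (k * m) → Multiset ℝ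
  | .inl j => {quarterUp (k * m) j, quarterDown j, 1 / 2 + grain (k * m)} +
      Multiset.replicate (k - 3) (tiny k (k * m))
  | .inr (.inl _) => {1 / 4 - 4 * grain (k * m), 1 / 4 + 2 * grain (k * m), 1 / 2 + grain (k * m)} +
      Multiset.replicate (k - 3) (tiny k (k * m))
  | .inr (.inr _) => {1 / 2 - 2 * grain (k * m), 1 / 2 + grain (k * m)} +
      Multiset.replicate (k - 2) (tiny k (k * m))

theorem coe_flatten_range (M : ℕ) (g : ℕ → List ℝ) :
    (((List.range M).map g).flatten : Multiset ℝ) = ∑ j ∈ Finset.range M, (g j : Multiset ℝ) := by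
  induction M with
  | zero => simp
  | succ M ih =>
    rw [List.range_succ, Finset.sum_range_succ, ← ih]
    simp

theorem coe_flatten_replicate (n : ℕ) (l : List ℝ) :
    ((List.replicate n l).flatten : Multiset ℝ) = n • (l : Multiset ℝ) := by
  induction n with
  | zero => simp
  | succ n ih =>
    rw [List.replicate_succ, List.flatten_cons, ← Multiset.coe_add, ih, succ_nsmul']

theorem coe_cons_eq (a : ℝ) (l : List ℝ) : ((a :: l : List ℝ) : Multiset ℝ) = {a} + (l : Multiset ℝ) := by
  rw [← Multiset.cons_coe, Multiset.singleton_add]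

theorem coe_instance {k : ℕ} (hk : 3 ≤ k) (m : ℕ) :
    (((groups k m).flatten ++ extras k m : List ℝ) : Multiset ℝ) = ∑ i, optBin k m i := by
  obtain ⟨c, rfl⟩ : ∃ c, k = c + 3 := ⟨k - 3, by omega⟩
  rw [Fintype.sum_sum_type, Fintype.sum_sum_type]
  simp only [optBin, groups, extras, List.flatten_append, ← Multiset.coe_add, coe_flatten_range,
    coe_flatten_replicate, coe_cons_eq, Multiset.coe_replicate, Multiset.coe_nil, add_zero,
    Multiset.insert_eq_cons, ← Multiset.singleton_add, Finset.sum_const, Finset.card_univ,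
    Fintype.card_fin]
  rw [Fin.sum_univ_eq_sum_range (fun j => {quarterUp ((c + 3) * m) j} + ({quarterDown j} +
    {1 / 2 + grain ((c + 3) * m)}) + Multiset.replicate (c + 3 - 3) (tiny (c + 3) ((c + 3) * m)))]
  simp only [Finset.sum_add_distrib, Finset.sum_const, Finset.card_range]
  rw [Finset.sum_range_succ (fun j => ({quarterUp ((c + 3) * m) j} : Multiset ℝ)),
    Finset.sum_range_succ' (fun j => ({quarterDown j} : Multiset ℝ))]
  rw [show 3 * (c + 3) - 8 = 3 * c + 1 by omega, show c + 3 - 3 = c by omega,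
    show c + 3 - 2 = c + 1 by omega]
  simp only [← Multiset.nsmul_singleton]
  module

theorem optBin_card {k : ℕ} (hk : 3 ≤ k) (m : ℕ) (i) : (optBin k m i).card ≤ k := by
  rcases i with j | j | j <;> simp [optBin] <;> omega

theorem optBin_sum {k : ℕ} (hk : 3 ≤ k) (m : ℕ) (i) : (optBin k m i).sum ≤ 1 := by
  have h3 := mul_tiny_le hk (Nat.sub_le k 3) (k * m)
  have h2 := mul_tiny_le hk (Nat.sub_le k 2) (k * m)
  rcases i with j | j | j <;>
    simp only [optBin, Multiset.insert_eq_cons, Multiset.sum_add, Multiset.sum_cons,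
      Multiset.sum_singleton, Multiset.sum_replicate, nsmul_eq_mul, quarterUp, quarterDown] <;>
    linarith

theorem length_groups {k : ℕ} (hk : 3 ≤ k) (m : ℕ) : (groups k m).length = 8 * m * (k - 1) := by
  obtain ⟨c, rfl⟩ : ∃ c, k = c + 3 := ⟨k - 3, by omega⟩
  rw [groups, show 3 * (c + 3) - 8 = 3 * c + 1 by omega, show c + 3 - 1 = c + 2 by omega]
  simp only [List.length_append, List.length_replicate, List.length_map, List.length_range]
  ring

theorem validInput_instance {k : ℕ} (hk : 3 ≤ k) (m : ℕ) :
    ValidInput ((groups k m).flatten ++ extras k m) := by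
  intro x hx
  rcases List.mem_append.mp hx with hx | hx
  · obtain ⟨G, hG, hx⟩ := List.mem_flatten.mp hx
    obtain ⟨_, _, h3, h4⟩ := groups_good hk m G hG
    exact ⟨h4 x hx, (List.single_le_sum (fun y hy => (h4 y hy).le) x hx).trans h3⟩
  · have hu := grain_pos (k * m)
    have hu' := grain_le (k * m)
    have h1 := nine_grain_le (le_refl (k * m))
    have h2 := offset_le (k * m)
    have h3 := offset_le 0
    have h4 := nine_grain_le (Nat.zero_le (k * m))
    simp only [extras, List.mem_cons, List.mem_replicate, quarterUp, quarterDown] at hx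
    rcases hx with rfl | rfl | rfl | ⟨_, rfl⟩
    · constructor <;> linarith
    · constructor <;> linarith
    · constructor <;> linarith
    · have := mul_tiny_le hk (show 1 ≤ k by omega) (k * m)
      have := tiny_pos hk (k * m)
      push_cast at *
      constructor <;> linarith

/-- For 5 ≤ k ≤ 10, every ε > 0 and every N there is an input `L` with
OPT(L) ≥ N and FF(L) ≥ (8(k−1)/(3k) − ε)·OPT(L): the asymptotic competitive ratio
of First Fit for 5 ≤ k ≤ 10 is at least 8(k−1)/(3k). -/
theorem ff_lb_mid_k (k : ℕ) (hk1 : 5 ≤ k) (hk2 : k ≤ 10) (ε : ℝ) (hε : 0 < ε)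
    (N : ℕ) :
    ∃ L : List ℝ, ValidInput L ∧ N ≤ OPT k L ∧
      (8 * ((k : ℝ) - 1) / (3 * k) - ε) * (OPT k L : ℝ) ≤ (FF k L : ℝ) := by
  have hk : 3 ≤ k := by omega
  obtain ⟨R, hR⟩ := exists_nat_ge (3 / ε)
  let m := max N R
  let L := (groups k m).flatten ++ extras k m
  obtain ⟨f, hf, hfn⟩ := exists_feasible k L (optBin k m) (coe_instance hk m)
    (optBin_card hk m) (optBin_sum hk m)
  have hupper : OPT k L ≤ 3 * (k * m) + 1 := by
    have := (OPT_le hf).trans hfn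
    simp only [Fintype.card_sum, Fintype.card_fin] at this
    omega
  have hFF : 8 * m * (k - 1) ≤ FF k L := by
    have h := ffState_flatten k (groups k m)
      (fun G hG => ⟨(groups_good hk m G hG).1, (groups_good hk m G hG).2.1,
        (groups_good hk m G hG).2.2.1, fun x hx => ((groups_good hk m G hG).2.2.2 x hx).le⟩)
      (groups_pairwise m)
    have h' : FF k (groups k m).flatten = 8 * m * (k - 1) := by
      rw [FF, h, List.length_map, length_groups hk]
    rw [← h']
    exact FF_le_append _ _ _
  have hlower : m ≤ OPT k L := by
    -- the `3km` large items already number at least `km`, and a bin has at most `k` items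
    have h1 : k * m ≤ L.length := by
      have : k * m ≤ (groups k m).flatten.length := by
        simp only [groups, List.flatten_append, List.length_append, List.length_flatten,
          List.map_replicate, List.sum_replicate, List.length_singleton, smul_eq_mul]
        omega
      simp only [L, List.length_append]
      omega
    exact Nat.le_of_mul_le_mul_left (h1.trans (length_le_mul_OPT hf)) (by omega)
  refine ⟨L, validInput_instance hk m, (le_max_left N R).trans hlower, ?_⟩
  have hkR : (5 : ℝ) ≤ k := by exact_mod_cast hk1
  have hupper' : (OPT k L : ℝ) ≤ 3 * (k * m) + 1 := by exact_mod_cast hupper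
  have hFF' : 8 * (m : ℝ) * (k - 1) ≤ FF k L := by
    have : ((8 * m * (k - 1) : ℕ) : ℝ) ≤ FF k L := by exact_mod_cast hFF
    push_cast [Nat.cast_sub (show 1 ≤ k by omega)] at this
    exact this
  have hεO : 3 ≤ ε * OPT k L := by
    have h1 : (R : ℝ) ≤ OPT k L := by exact_mod_cast (le_max_right N R).trans hlower
    have h2 := hR.trans h1
    rw [div_le_iff₀ hε] at h2
    linarith
  -- the single extra optimal bin costs at most `8(k-1)/(3k) < 3`, which is absorbed by `ε * OPT`
  have hc0 : 0 ≤ 8 * ((k : ℝ) - 1) / (3 * k) := by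
    apply div_nonneg <;> linarith
  have hc3 : 8 * ((k : ℝ) - 1) / (3 * k) ≤ 3 := by
    rw [div_le_iff₀ (by linarith)]; linarith
  have hmul := mul_le_mul_of_nonneg_left hupper' hc0
  have heq : 8 * ((k : ℝ) - 1) / (3 * k) * (3 * (k * m) + 1)
      = 8 * m * (k - 1) + 8 * ((k : ℝ) - 1) / (3 * k) := by
    field_simp
  linarith
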